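/- arXiv:2404.03154 — 6 statements merged into one kernel-verified Lean document; each statement's English description precedes it below -/
import Mathlib

section
/- Let S be a nonempty finite index set and let c : S → ℝ satisfy c i > 0 for all i. Define y* : S → ℝ by y* i = √(c i) / (∑_{k∈S} √(c k)). Then y* i > 0 for all i, ∑_{i∈S} y* i = 1, and ∑_{i∈S} c i / (y* i) = (∑_{i∈S} √(c i))²; consequently y* is a global minimizer of y ↦ ∑_{i∈S} c i / y i over all y with y i > 0 and ∑_{i∈S} y i ≤ 1. -/
/-- Closed-form optimal bandwidth allocation: `y* i = √(c i) / ∑ k √(c k)` is positive,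
sums to one, attains the value `(∑ √(c i))²`, and globally minimizes
`y ↦ ∑ c i / y i` over positive `y` summing to at most `1`. -/
theorem stmt_1 {S : Type*} [Fintype S] [Nonempty S]
    (c : S → ℝ) (hc : ∀ i, 0 < c i)
    (ystar : S → ℝ)
    (hystar : ∀ i, ystar i = Real.sqrt (c i) / (∑ k, Real.sqrt (c k))) :
    (∀ i, 0 < ystar i) ∧
    (∑ i, ystar i = 1) ∧
    (∑ i, c i / ystar i = (∑ i, Real.sqrt (c i)) ^ 2) ∧
    (∀ y : S → ℝ, (∀ i, 0 < y i) → (∑ i, y i ≤ 1) →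
      ∑ i, c i / ystar i ≤ ∑ i, c i / y i) := by
  have hs : ∀ i, 0 < Real.sqrt (c i) := fun i => Real.sqrt_pos.mpr (hc i)
  have hT : 0 < ∑ k, Real.sqrt (c k) :=
    Finset.sum_pos (fun i _ => hs i) Finset.univ_nonempty
  have hval : ∑ i, c i / ystar i = (∑ i, Real.sqrt (c i)) ^ 2 := by
    rw [sq, Finset.sum_mul]
    refine Finset.sum_congr rfl fun i _ => ?_
    have h1 := (hs i).ne'
    have h2 := Real.mul_self_sqrt (hc i).le
    rw [hystar i, div_div_eq_mul_div, div_eq_iff h1]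
    linear_combination (-(∑ k, Real.sqrt (c k))) * h2
  refine ⟨fun i => ?_, ?_, hval, fun y hy hy1 => ?_⟩
  · rw [hystar i]
    exact div_pos (hs i) hT
  · simp only [hystar]
    rw [← Finset.sum_div, div_self hT.ne']
  · rw [hval]
    have h := Finset.sq_sum_div_le_sum_sq_div Finset.univ (fun i => Real.sqrt (c i))
      (g := y) (fun i _ => hy i)
    simp only [Real.sq_sqrt (hc _).le] at h
    have hY : 0 < ∑ i, y i := Finset.sum_pos (fun i _ => hy i) Finset.univ_nonempty
    exact (le_div_self (sq_nonneg _) hY hy1).trans h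
end

section
/- Let S be a nonempty finite index set, let f, ρ : S → ℝ be positive functions, and let F, Z > 0 be reals. Define z* : S → ℝ by z* i = √(f i · ρ i) / (∑_{k∈S} √(f k · ρ k)). Then z* i > 0 for all i, ∑_{i∈S} z* i = 1, and for every z : S → ℝ with z i > 0 for all i and ∑_{i∈S} z i ≤ 1 one has ∑_{i∈S} (f i · ρ i)/(F · Z · z i) ≥ ∑_{i∈S} (f i · ρ i)/(F · Z · z* i) = (∑_{i∈S} √((f i · ρ i)/(F · Z)))². -/
/-- Closed-form optimal computing resource allocation:
`z* i = √(f i · ρ i) / ∑ k √(f k · ρ k)` is positive, sums to one, and for every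
positive `z` summing to at most `1`, the Amdahl parallel-part delay satisfies
`∑ (f i ρ i)/(F Z z i) ≥ ∑ (f i ρ i)/(F Z z* i) = (∑ √((f i ρ i)/(F Z)))²`. -/
theorem stmt_3 {S : Type*} [Fintype S] [Nonempty S]
    (f ρ : S → ℝ) (hf : ∀ i, 0 < f i) (hρ : ∀ i, 0 < ρ i)
    (F Z : ℝ) (hF : 0 < F) (hZ : 0 < Z)
    (zstar : S → ℝ)
    (hzstar : ∀ i, zstar i = Real.sqrt (f i * ρ i) / (∑ k, Real.sqrt (f k * ρ k))) :
    (∀ i, 0 < zstar i) ∧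
    (∑ i, zstar i = 1) ∧
    (∀ z : S → ℝ, (∀ i, 0 < z i) → (∑ i, z i ≤ 1) →
      ∑ i, (f i * ρ i) / (F * Z * z i) ≥ ∑ i, (f i * ρ i) / (F * Z * zstar i)) ∧
    (∑ i, (f i * ρ i) / (F * Z * zstar i) = (∑ i, Real.sqrt ((f i * ρ i) / (F * Z))) ^ 2) := by
  have hs : ∀ i, 0 < Real.sqrt (f i * ρ i) := fun i => Real.sqrt_pos.mpr (mul_pos (hf i) (hρ i))
  have hsq : ∀ i, f i * ρ i = Real.sqrt (f i * ρ i) ^ 2 := fun i =>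
    (Real.sq_sqrt (mul_pos (hf i) (hρ i)).le).symm
  have hT : 0 < ∑ k, Real.sqrt (f k * ρ k) :=
    Finset.sum_pos (fun i _ => hs i) Finset.univ_nonempty
  have hFZ : 0 < F * Z := mul_pos hF hZ
  have hval : ∑ i, (f i * ρ i) / (F * Z * zstar i)
      = (∑ k, Real.sqrt (f k * ρ k)) ^ 2 / (F * Z) := by
    have h1 : ∀ i, (f i * ρ i) / (F * Z * zstar i)
        = Real.sqrt (f i * ρ i) * ((∑ k, Real.sqrt (f k * ρ k)) / (F * Z)) := by
      intro i
      rw [hzstar i]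
      have h2 := hsq i
      have h3 := hs i
      generalize Real.sqrt (f i * ρ i) = s at *
      rw [h2]
      field_simp
    rw [Finset.sum_congr rfl (fun i _ => h1 i), ← Finset.sum_mul]
    ring
  refine ⟨fun i => ?_, ?_, ?_, ?_⟩
  · rw [hzstar i]; exact div_pos (hs i) hT
  · rw [Finset.sum_congr rfl (fun i _ => hzstar i), ← Finset.sum_div]
    exact div_self hT.ne'
  · intro z hz hz1
    rw [hval, ge_iff_le]
    have h := Finset.sq_sum_div_le_sum_sq_div Finset.univ (fun i => Real.sqrt (f i * ρ i))
      (g := fun i => F * Z * z i) (fun i _ => mul_pos hFZ (hz i))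
    simp only [← hsq] at h
    refine le_trans ?_ h
    rw [← Finset.mul_sum]
    have hzs : 0 < ∑ i, z i := Finset.sum_pos (fun i _ => hz i) Finset.univ_nonempty
    apply div_le_div_of_nonneg_left (sq_nonneg _) (mul_pos hFZ hzs)
    exact mul_le_of_le_one_right hFZ.le hz1
  · rw [hval]
    have h1 : ∀ i, Real.sqrt ((f i * ρ i) / (F * Z))
        = Real.sqrt (f i * ρ i) / Real.sqrt (F * Z) :=
      fun i => Real.sqrt_div (mul_pos (hf i) (hρ i)).le _
    rw [Finset.sum_congr rfl (fun i _ => h1 i), ← Finset.sum_div, div_pow, Real.sq_sqrt hFZ.le]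
end

section
/- Let m, n ≥ 1, M = Fin m, E = Fin n, let p, q : M → E → ℝ be entrywise nonnegative, c : M → E → ℝ arbitrary, and let μ, ν : E → ℝ be entrywise nonnegative. Call x : M → E → ℝ feasible if x i j ∈ {0,1} for all i, j and ∑_{j∈E} x i j ≤ 1 for each i. Define the Lagrangian L(x, a, b) = ∑_{j∈E}(a j + b j) + ∑_{i∈M}∑_{j∈E} c i j · x i j + ∑_{j∈E} μ j ·(−√(a j) + ∑_{i∈M} p i j · x i j) + ∑_{j∈E} ν j ·(−√(b j) + ∑_{i∈M} q i j · x i j) for a, b : E → ℝ with a j, b j ≥ 0. Then the infimum of L over all feasible x and all entrywise-nonnegative a, b is attained and equals g(μ, ν) = −∑_{j∈E}(μ j² + ν j²)/4 + ∑_{i∈M} min(0, min_{j∈E}(μ j · p i j + ν j · q i j + c i j)). -/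
theorem aux_identity (m n : ℕ) (p q c x : Fin m → Fin n → ℝ) (μ ν a b : Fin n → ℝ) :
    ∑ j, (a j + b j) + ∑ i, ∑ j, c i j * x i j
      + ∑ j, μ j * (-Real.sqrt (a j) + ∑ i, p i j * x i j)
      + ∑ j, ν j * (-Real.sqrt (b j) + ∑ i, q i j * x i j)
    = ∑ j, ((a j - μ j * Real.sqrt (a j)) + (b j - ν j * Real.sqrt (b j)))
      + ∑ i, ∑ j, (μ j * p i j + ν j * q i j + c i j) * x i j := by
  rw [Finset.sum_comm (f := fun i j => c i j * x i j),
    Finset.sum_comm (f := fun i j => (μ j * p i j + ν j * q i j + c i j) * x i j)]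
  simp only [← Finset.sum_add_distrib]
  refine Finset.sum_congr rfl fun j _ => ?_
  simp only [add_mul, Finset.sum_add_distrib, mul_add, Finset.mul_sum, mul_assoc]
  ring

theorem aux_sqrt (a t : ℝ) (ha : 0 ≤ a) : -(t ^ 2 / 4) ≤ a - t * Real.sqrt a := by
  nlinarith [Real.sq_sqrt ha, sq_nonneg (Real.sqrt a - t / 2)]

theorem aux_sqrt_eq (t : ℝ) (ht : 0 ≤ t) :
    (t / 2) ^ 2 - t * Real.sqrt ((t / 2) ^ 2) = -(t ^ 2 / 4) := by
  rw [Real.sqrt_sq (by positivity)]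
  ring

theorem aux_row (n : ℕ) (w : Fin n → ℝ) (h : (Finset.univ : Finset (Fin n)).Nonempty) :
    ∃ y : Fin n → ℝ, (∀ j, y j = 0 ∨ y j = 1) ∧ ∑ j, y j ≤ 1 ∧
      ∑ j, w j * y j = min 0 (Finset.univ.inf' h w) := by
  rcases le_total 0 (Finset.univ.inf' h w) with h0 | h0
  · exact ⟨fun _ => 0, by simp, by simp, by simp [min_eq_left h0]⟩
  · obtain ⟨k, -, hk⟩ := Finset.exists_mem_eq_inf' h w
    refine ⟨fun j => if j = k then 1 else 0, fun j => ?_, by simp, ?_⟩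
    · by_cases hj : j = k <;> simp [hj]
    · rw [min_eq_right h0, hk]
      simp

theorem aux_row_le (n : ℕ) (w y : Fin n → ℝ) (h : (Finset.univ : Finset (Fin n)).Nonempty)
    (hy : ∀ j, y j = 0 ∨ y j = 1) (hs : ∑ j, y j ≤ 1) :
    min 0 (Finset.univ.inf' h w) ≤ ∑ j, w j * y j := by
  set t := min 0 (Finset.univ.inf' h w) with ht
  have ht0 : t ≤ 0 := min_le_left _ _
  have hw : ∀ j, t ≤ w j := fun j =>
    (min_le_right _ _).trans (Finset.inf'_le w (Finset.mem_univ j))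
  calc t ≤ t * ∑ j, y j := by nlinarith
    _ = ∑ j, t * y j := Finset.mul_sum _ _ _
    _ ≤ ∑ j, w j * y j := Finset.sum_le_sum fun j _ => by
      rcases hy j with h | h <;> simp [h, hw j]

/-- Closed form of the Lagrangian dual objective of the slack-reformulated
user-association problem: the infimum of the Lagrangian over feasible `x`
(`{0,1}`-valued with row sums at most `1`) and nonnegative slacks `a b` is
attained and equals
`−∑_j (μ j² + ν j²)/4 + ∑_i min(0, min_j (μ j p i j + ν j q i j + c i j))`. -/
theorem stmt_6 (m n : ℕ) (hm : 0 < m) (hn : 0 < n)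
    (p q c : Fin m → Fin n → ℝ)
    (hp : ∀ i j, 0 ≤ p i j) (hq : ∀ i j, 0 ≤ q i j)
    (μ ν : Fin n → ℝ) (hμ : ∀ j, 0 ≤ μ j) (hν : ∀ j, 0 ≤ ν j) :
    IsLeast
      { v : ℝ | ∃ (x : Fin m → Fin n → ℝ) (a b : Fin n → ℝ),
          (∀ i j, x i j = 0 ∨ x i j = 1) ∧ (∀ i, ∑ j, x i j ≤ 1) ∧
          (∀ j, 0 ≤ a j) ∧ (∀ j, 0 ≤ b j) ∧
          v = ∑ j, (a j + b j) + ∑ i, ∑ j, c i j * x i j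
              + ∑ j, μ j * (-Real.sqrt (a j) + ∑ i, p i j * x i j)
              + ∑ j, ν j * (-Real.sqrt (b j) + ∑ i, q i j * x i j) }
      (-∑ j, (μ j ^ 2 + ν j ^ 2) / 4
        + ∑ i, min 0 (Finset.univ.inf' ⟨⟨0, hn⟩, Finset.mem_univ _⟩
            (fun j => μ j * p i j + ν j * q i j + c i j))) := by
  constructor
  · choose x hx1 hx2 hx3 using fun i : Fin m =>
      aux_row n (fun j => μ j * p i j + ν j * q i j + c i j) ⟨⟨0, hn⟩, Finset.mem_univ _⟩
    refine ⟨x, fun j => (μ j / 2) ^ 2, fun j => (ν j / 2) ^ 2, hx1, hx2,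
      fun j => sq_nonneg _, fun j => sq_nonneg _, ?_⟩
    rw [aux_identity, ← Finset.sum_neg_distrib]
    congr 1
    · refine Finset.sum_congr rfl fun j _ => ?_
      rw [aux_sqrt_eq _ (hμ j), aux_sqrt_eq _ (hν j)]
      ring
    · exact Finset.sum_congr rfl fun i _ => (hx3 i).symm
  · rintro v ⟨x, a, b, hx, hs, ha, hb, rfl⟩
    rw [aux_identity, ← Finset.sum_neg_distrib]
    refine add_le_add (Finset.sum_le_sum fun j _ => ?_) (Finset.sum_le_sum fun i _ => ?_)
    · linarith [aux_sqrt (a j) (μ j) (ha j), aux_sqrt (b j) (ν j) (hb j)]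
    · exact aux_row_le n _ (x i) _ (hx i) (hs i)
end

section
/- Let m, n ≥ 1, M = Fin m, E = Fin n, let p, q : M → E → ℝ be entrywise nonnegative and c : M → E → ℝ. Define F(x) = ∑_{j∈E}(∑_{i∈M} p i j · x i j)² + ∑_{j∈E}(∑_{i∈M} q i j · x i j)² + ∑_{i∈M}∑_{j∈E} c i j · x i j and g(μ, ν) = −∑_{j∈E}(μ j² + ν j²)/4 + ∑_{i∈M} min(0, min_{j∈E}(μ j · p i j + ν j · q i j + c i j)). Then for every μ, ν : E → ℝ with μ j ≥ 0 and ν j ≥ 0 for all j, and every feasible x (meaning x i j ∈ {0,1} for all i, j and ∑_{j∈E} x i j ≤ 1 for each i), one has g(μ, ν) ≤ F(x). In particular g(μ, ν) is a lower bound on the optimal value of the primal user-association problem. -/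
/-- Weak duality for the user-association problem: for nonnegative dual
variables `μ, ν` and every feasible association matrix `x` (`{0,1}`-valued with
row sums at most `1`), the dual value `g(μ, ν)` is a lower bound on the primal
objective `F(x)`. -/
theorem stmt_8 (m n : ℕ) (hm : 0 < m) (hn : 0 < n)
    (p q c : Fin m → Fin n → ℝ)
    (hp : ∀ i j, 0 ≤ p i j) (hq : ∀ i j, 0 ≤ q i j)
    (μ ν : Fin n → ℝ) (hμ : ∀ j, 0 ≤ μ j) (hν : ∀ j, 0 ≤ ν j)
    (x : Fin m → Fin n → ℝ)
    (hx01 : ∀ i j, x i j = 0 ∨ x i j = 1) (hxrow : ∀ i, ∑ j, x i j ≤ 1) :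
    -∑ j, (μ j ^ 2 + ν j ^ 2) / 4
      + ∑ i, min 0 (Finset.univ.inf' ⟨⟨0, hn⟩, Finset.mem_univ _⟩
          (fun j => μ j * p i j + ν j * q i j + c i j))
    ≤ ∑ j, (∑ i, p i j * x i j) ^ 2 + ∑ j, (∑ i, q i j * x i j) ^ 2
      + ∑ i, ∑ j, c i j * x i j := by
  have h1 : ∀ i, min 0 (Finset.univ.inf' ⟨⟨0, hn⟩, Finset.mem_univ _⟩
          (fun j => μ j * p i j + ν j * q i j + c i j))
      ≤ ∑ j, (μ j * p i j + ν j * q i j + c i j) * x i j := by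
    intro i
    set t := min 0 (Finset.univ.inf' ⟨⟨0, hn⟩, Finset.mem_univ _⟩
          (fun j => μ j * p i j + ν j * q i j + c i j)) with ht
    have ht0 : t ≤ 0 := min_le_left _ _
    have hta : ∀ j, t ≤ μ j * p i j + ν j * q i j + c i j := fun j =>
      (min_le_right _ _).trans
        (Finset.inf'_le (fun j => μ j * p i j + ν j * q i j + c i j) (Finset.mem_univ j))
    have hs : ∑ j, t * x i j ≤ ∑ j, (μ j * p i j + ν j * q i j + c i j) * x i j := by
      apply Finset.sum_le_sum
      intro j _
      apply mul_le_mul_of_nonneg_right (hta j)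
      rcases hx01 i j with h | h <;> rw [h] <;> norm_num
    rw [← Finset.mul_sum] at hs
    nlinarith [hxrow i]
  have h2 := Finset.sum_le_sum (fun i (_ : i ∈ Finset.univ) => h1 i)
  have h3 : ∑ i, ∑ j, (μ j * p i j + ν j * q i j + c i j) * x i j
      = ∑ j, (μ j * ∑ i, p i j * x i j) + ∑ j, (ν j * ∑ i, q i j * x i j)
        + ∑ i, ∑ j, c i j * x i j := by
    simp only [Finset.mul_sum]
    rw [Finset.sum_comm (f := fun j i => μ j * (p i j * x i j)),
      Finset.sum_comm (f := fun j i => ν j * (q i j * x i j))]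
    simp only [← Finset.sum_add_distrib]
    refine Finset.sum_congr rfl fun i _ => Finset.sum_congr rfl fun j _ => ?_
    ring
  have h4 : ∑ j, (μ j * ∑ i, p i j * x i j) + ∑ j, (ν j * ∑ i, q i j * x i j)
      ≤ ∑ j, (∑ i, p i j * x i j) ^ 2 + ∑ j, (∑ i, q i j * x i j) ^ 2
        + ∑ j, (μ j ^ 2 + ν j ^ 2) / 4 := by
    simp only [← Finset.sum_add_distrib]
    apply Finset.sum_le_sum
    intro j _
    nlinarith [sq_nonneg (∑ i, p i j * x i j - μ j / 2), sq_nonneg (∑ i, q i j * x i j - ν j / 2)]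
  linarith
end

section
/- Let m, n ≥ 1, M = Fin m, E = Fin n, let p, q : M → E → ℝ and c : M → E → ℝ, and let μ, ν : E → ℝ. Set w i j = μ j · p i j + ν j · q i j + c i j. Suppose x̂ is feasible (x̂ i j ∈ {0,1}, ∑_{j∈E} x̂ i j ≤ 1 for each i) and minimizes ∑_{i∈M}∑_{j∈E} w i j · x i j over all feasible x. Define Δ₁ j = μ j / 2 − ∑_{i∈M} p i j · x̂ i j and Δ₂ j = ν j / 2 − ∑_{i∈M} q i j · x̂ i j. Then, with F and g as above, F(x̂) − g(μ, ν) = ∑_{j∈E} (Δ₁ j² + Δ₂ j²). -/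
theorem row_sum_aux (m n : ℕ) (hn : 0 < n) (w : Fin m → Fin n → ℝ)
    (xhat : Fin m → Fin n → ℝ)
    (h01 : ∀ i j, xhat i j = 0 ∨ xhat i j = 1)
    (hrow : ∀ i, ∑ j, xhat i j ≤ 1)
    (hmin : ∀ x : Fin m → Fin n → ℝ,
      (∀ i j, x i j = 0 ∨ x i j = 1) → (∀ i, ∑ j, x i j ≤ 1) →
      ∑ i, ∑ j, w i j * xhat i j ≤ ∑ i, ∑ j, w i j * x i j) :
    ∑ i, min 0 (Finset.univ.inf' ⟨⟨0, hn⟩, Finset.mem_univ _⟩ (fun j => w i j))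
      = ∑ i, ∑ j, w i j * xhat i j := by
  apply le_antisymm
  · apply Finset.sum_le_sum
    intro i _
    set t := min 0 (Finset.univ.inf' ⟨⟨0, hn⟩, Finset.mem_univ _⟩ (fun j => w i j)) with ht
    have ht0 : t ≤ 0 := min_le_left _ _
    have htw : ∀ j, t ≤ w i j := fun j =>
      (min_le_right _ _).trans (Finset.inf'_le (fun j => w i j) (Finset.mem_univ j))
    have h1 : ∑ j, t * xhat i j ≤ ∑ j, w i j * xhat i j := by
      apply Finset.sum_le_sum
      intro j _
      rcases h01 i j with h | h
      · simp [h]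
      · simpa [h] using htw j
    rw [← Finset.mul_sum] at h1
    nlinarith [hrow i]
  · have hex : ∀ i, ∃ j0, Finset.univ.inf' ⟨⟨0, hn⟩, Finset.mem_univ _⟩ (fun j => w i j)
        = w i j0 := by
      intro i
      obtain ⟨j, _, hj⟩ := Finset.exists_mem_eq_inf'
        (s := (Finset.univ : Finset (Fin n))) ⟨⟨0, hn⟩, Finset.mem_univ _⟩ (fun j => w i j)
      exact ⟨j, hj⟩
    choose j0 hj0 using hex
    refine (hmin (fun i j => if j = j0 i then (if w i (j0 i) < 0 then 1 else 0) else 0)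
      ?_ ?_).trans ?_
    · intro i j
      split_ifs <;> simp
    · intro i
      simp only [Finset.sum_ite_eq', Finset.sum_ite_eq, Finset.mem_univ, if_true]
      split_ifs <;> norm_num
    · apply Finset.sum_le_sum
      intro i _
      rw [hj0 i]
      simp only [mul_ite, mul_zero, mul_one, Finset.sum_ite_eq', Finset.mem_univ, if_true]
      split_ifs with h
      · rw [min_eq_right h.le]
      · rw [min_eq_left (not_lt.mp h)]

/-- Exact duality-gap identity for the user-association problem: if `x̂` is
feasible and minimizes `∑ w i j · x i j` over feasible `x` (where
`w i j = μ j p i j + ν j q i j + c i j`), then with the residuals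
`Δ₁ j = μ j/2 − ∑_i p i j x̂ i j` and `Δ₂ j = ν j/2 − ∑_i q i j x̂ i j`,
one has `F(x̂) − g(μ, ν) = ∑_j (Δ₁ j² + Δ₂ j²)`. -/
theorem stmt_9 (m n : ℕ) (hm : 0 < m) (hn : 0 < n)
    (p q c : Fin m → Fin n → ℝ) (μ ν : Fin n → ℝ)
    (xhat : Fin m → Fin n → ℝ)
    (hxhat01 : ∀ i j, xhat i j = 0 ∨ xhat i j = 1)
    (hxhatrow : ∀ i, ∑ j, xhat i j ≤ 1)
    (hmin : ∀ x : Fin m → Fin n → ℝ,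
      (∀ i j, x i j = 0 ∨ x i j = 1) → (∀ i, ∑ j, x i j ≤ 1) →
      ∑ i, ∑ j, (μ j * p i j + ν j * q i j + c i j) * xhat i j
        ≤ ∑ i, ∑ j, (μ j * p i j + ν j * q i j + c i j) * x i j) :
    (∑ j, (∑ i, p i j * xhat i j) ^ 2 + ∑ j, (∑ i, q i j * xhat i j) ^ 2
        + ∑ i, ∑ j, c i j * xhat i j)
      - (-∑ j, (μ j ^ 2 + ν j ^ 2) / 4
          + ∑ i, min 0 (Finset.univ.inf' ⟨⟨0, hn⟩, Finset.mem_univ _⟩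
              (fun j => μ j * p i j + ν j * q i j + c i j)))
    = ∑ j, ((μ j / 2 - ∑ i, p i j * xhat i j) ^ 2
        + (ν j / 2 - ∑ i, q i j * xhat i j) ^ 2) := by
  rw [row_sum_aux m n hn (fun i j => μ j * p i j + ν j * q i j + c i j) xhat
    hxhat01 hxhatrow hmin]
  have hL : ∑ i, ∑ j, (μ j * p i j + ν j * q i j + c i j) * xhat i j
      = ∑ j, μ j * ∑ i, p i j * xhat i j + ∑ j, ν j * ∑ i, q i j * xhat i j
        + ∑ i, ∑ j, c i j * xhat i j := by
    simp only [Finset.mul_sum]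
    rw [Finset.sum_comm (f := fun j i => μ j * (p i j * xhat i j)),
      Finset.sum_comm (f := fun j i => ν j * (q i j * xhat i j))]
    simp only [← Finset.sum_add_distrib]
    refine Finset.sum_congr rfl fun i _ => Finset.sum_congr rfl fun j _ => ?_
    ring
  rw [hL]
  have hR : ∑ j, ((μ j / 2 - ∑ i, p i j * xhat i j) ^ 2
        + (ν j / 2 - ∑ i, q i j * xhat i j) ^ 2)
      = ∑ j, (∑ i, p i j * xhat i j) ^ 2 + ∑ j, (∑ i, q i j * xhat i j) ^ 2
        + ∑ j, (μ j ^ 2 + ν j ^ 2) / 4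
        - ∑ j, μ j * ∑ i, p i j * xhat i j - ∑ j, ν j * ∑ i, q i j * xhat i j := by
    simp only [← Finset.sum_add_distrib, ← Finset.sum_sub_distrib]
    refine Finset.sum_congr rfl fun j _ => ?_
    ring
  rw [hR]
  ring
end

section
/- (Weak duality / bounded optimality gap.) Let m, n ≥ 1, M = Fin m, E = Fin n, let p, q : M → E → ℝ be entrywise nonnegative, c : M → E → ℝ, and let μ, ν : E → ℝ be entrywise nonnegative. Set w i j = μ j · p i j + ν j · q i j + c i j. Suppose x̂ is feasible (x̂ i j ∈ {0,1}, ∑_{j∈E} x̂ i j ≤ 1 for each i) and minimizes ∑_{i,j} w i j · x i j over all feasible x, and define Δ₁ j = μ j / 2 − ∑_{i∈M} p i j · x̂ i j and Δ₂ j = ν j / 2 − ∑_{i∈M} q i j · x̂ i j. Then for every feasible x, F(x̂) − F(x) ≤ ∑_{j∈E} (Δ₁ j² + Δ₂ j²); i.e., the gap between the recovered solution x̂ and the globally optimal solution of the user-association problem is bounded by ∑_j ((Δ₁ j)² + (Δ₂ j)²). -/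
/-- Weak duality / bounded optimality gap (the paper's Theorem 1): if `x̂` is
feasible and minimizes `∑ w i j · x i j` over feasible `x` (where
`w i j = μ j p i j + ν j q i j + c i j`, with `p, q, μ, ν` nonnegative), then
for every feasible `x`, the gap `F(x̂) − F(x)` is bounded by
`∑_j (Δ₁ j² + Δ₂ j²)`, where `Δ₁ j = μ j/2 − ∑_i p i j x̂ i j` and
`Δ₂ j = ν j/2 − ∑_i q i j x̂ i j`. -/
theorem stmt_10 (m n : ℕ) (hm : 0 < m) (hn : 0 < n)
    (p q c : Fin m → Fin n → ℝ)
    (hp : ∀ i j, 0 ≤ p i j) (hq : ∀ i j, 0 ≤ q i j)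
    (μ ν : Fin n → ℝ) (hμ : ∀ j, 0 ≤ μ j) (hν : ∀ j, 0 ≤ ν j)
    (xhat : Fin m → Fin n → ℝ)
    (hxhat01 : ∀ i j, xhat i j = 0 ∨ xhat i j = 1)
    (hxhatrow : ∀ i, ∑ j, xhat i j ≤ 1)
    (hmin : ∀ x : Fin m → Fin n → ℝ,
      (∀ i j, x i j = 0 ∨ x i j = 1) → (∀ i, ∑ j, x i j ≤ 1) →
      ∑ i, ∑ j, (μ j * p i j + ν j * q i j + c i j) * xhat i j
        ≤ ∑ i, ∑ j, (μ j * p i j + ν j * q i j + c i j) * x i j) :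
    ∀ x : Fin m → Fin n → ℝ,
      (∀ i j, x i j = 0 ∨ x i j = 1) → (∀ i, ∑ j, x i j ≤ 1) →
      (∑ j, (∑ i, p i j * xhat i j) ^ 2 + ∑ j, (∑ i, q i j * xhat i j) ^ 2
          + ∑ i, ∑ j, c i j * xhat i j)
        - (∑ j, (∑ i, p i j * x i j) ^ 2 + ∑ j, (∑ i, q i j * x i j) ^ 2
          + ∑ i, ∑ j, c i j * x i j)
      ≤ ∑ j, ((μ j / 2 - ∑ i, p i j * xhat i j) ^ 2
          + (ν j / 2 - ∑ i, q i j * xhat i j) ^ 2) := by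
  intro x hx hxr
  have key : ∀ y : Fin m → Fin n → ℝ,
      ∑ i, ∑ j, (μ j * p i j + ν j * q i j + c i j) * y i j
        = ∑ j, (μ j * (∑ i, p i j * y i j) + ν j * (∑ i, q i j * y i j))
          + ∑ i, ∑ j, c i j * y i j := by
    intro y
    have h1 : ∑ j, (μ j * (∑ i, p i j * y i j) + ν j * (∑ i, q i j * y i j))
        = ∑ i, ∑ j, (μ j * (p i j * y i j) + ν j * (q i j * y i j)) := by
      rw [Finset.sum_comm]
      refine Finset.sum_congr rfl fun j _ => ?_
      rw [Finset.sum_add_distrib, Finset.mul_sum, Finset.mul_sum]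
    rw [h1, ← Finset.sum_add_distrib]
    refine Finset.sum_congr rfl fun i _ => ?_
    rw [← Finset.sum_add_distrib]
    refine Finset.sum_congr rfl fun j _ => ?_
    ring
  have h := hmin x hx hxr
  rw [key, key] at h
  have h2 : ∑ j, ((∑ i, p i j * xhat i j) ^ 2 + (∑ i, q i j * xhat i j) ^ 2
        + (μ j * (∑ i, p i j * x i j) + ν j * (∑ i, q i j * x i j)))
      ≤ ∑ j, (((μ j / 2 - ∑ i, p i j * xhat i j) ^ 2
          + (ν j / 2 - ∑ i, q i j * xhat i j) ^ 2)
        + (μ j * (∑ i, p i j * xhat i j) + ν j * (∑ i, q i j * xhat i j))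
        + ((∑ i, p i j * x i j) ^ 2 + (∑ i, q i j * x i j) ^ 2)) := by
    refine Finset.sum_le_sum fun j _ => ?_
    nlinarith [sq_nonneg (μ j / 2 - ∑ i, p i j * x i j),
      sq_nonneg (ν j / 2 - ∑ i, q i j * x i j)]
  simp only [Finset.sum_add_distrib] at h h2 ⊢
  linarith
end
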